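/- Let A = {a_n}_{n∈ℤ} ⊂ ℝ∖{0} with a_n = n/D + φ(n) for some D > 0 and bounded φ : ℤ → ℝ, and suppose μ_A = Σ_n δ_{a_n} is a temperate measure whose Fourier transform is a pure point measure μ̂_A = Σ_{γ∈Γ} b_γ δ_γ satisfying |μ̂_A|((0,s)) ≤ C e^{2πKs} for all s > 0 and some constants C, K. Let f(z) = (1 − z/a_0) ∏_{n=1}^∞ (1 − z/a_n)(1 − z/a_{−n}) be the associated canonical product. Then for every z with Im z > K the series below converge and f'(z)/f(z) = 1/(z − a_0) + Σ_{n∈ℕ} [1/(z − a_n) + 1/(z − a_{−n})] = −2πi Σ_{γ∈Γ, γ>0} b_γ e^{2πiγz} − πi b_0, the last series converging absolutely. -/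

import Mathlib

open MeasureTheory Metric Filter Topology Complex SchwartzMap Bornology
open scoped ENNReal

noncomputable section

/-- A continuous function `g` is *Bohr almost periodic* if for every `ε > 0` its set of
`ε`-almost periods is relatively dense. -/
def IsBohrAP {V : Type*} [SeminormedAddCommGroup V] (g : V → ℂ) : Prop :=
  Continuous g ∧ ∀ ε : ℝ, 0 < ε → ∃ L : ℝ, 0 < L ∧ ∀ x : V, ∃ τ : V,
    dist τ x < L ∧ ∀ y : V, ‖g (y + τ) - g y‖ < ε

/-- A pure point complex measure on `V`, described by its (countably supported) mass function. -/
structure PPM (V : Type*) where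
  mass : V → ℂ
  countable : (Function.support mass).Countable

namespace PPM

variable {V : Type*}

/-- The total variation of a pure point measure, evaluated on a set. -/
def var (μ : PPM V) (A : Set V) : ℝ≥0∞ := ∑' x : A, (‖μ.mass x‖₊ : ℝ≥0∞)

/-- Pairing of a pure point measure with a test function: `∫ φ dμ = Σ_x μ{x}·φ(x)`. -/
def pair (μ : PPM V) (φ : V → ℂ) : ℂ := ∑' x, μ.mass x * φ x

/-- Convolution `(μ ⋆ ψ)(t) = ∫ ψ(t - x) dμ(x)`. -/
def conv [SubtractionMonoid V] (μ : PPM V) (ψ : V → ℂ) (t : V) : ℂ :=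
  ∑' x, μ.mass x * ψ (t - x)

end PPM

/-- Local finiteness of a pure point measure on `ℝ`. -/
def PPM.locFinite (μ : PPM ℝ) : Prop := ∀ r : ℝ, μ.var (ball 0 r) < ⊤

/-- The measure is a temperate distribution: it pairs (absolutely) with every Schwartz
function. -/
def PPM.temperate (μ : PPM ℝ) : Prop :=
  ∀ φ : SchwartzMap ℝ ℂ, Summable fun x => μ.mass x * φ x

/-- `ν` is the distributional Fourier transform of `μ`: `μ(φ̂) = ν(φ)` on test functions. -/
def IsFT (μ ν : PPM ℝ) : Prop :=
  ∀ φ : SchwartzMap ℝ ℂ, HasCompactSupport φ →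
    μ.pair ⇑(FourierTransform.fourierCLE ℂ (SchwartzMap ℝ ℂ) φ) = ν.pair ⇑φ

/-- The measure is integer-valued: `μ = Σ_n δ_{a_n}` for a multiset `A = {a_n}`, the mass of
each point being its multiplicity. -/
def PPM.natValued (μ : PPM ℝ) : Prop := ∀ x : ℝ, ∃ k : ℕ, μ.mass x = k

/-- The value at `z ∈ ℂ` of (the entire extension of) the Dirichlet series
`Σ_ω q_ω e^{2πi z ω}`. -/
def dserC (q : ℕ → ℂ) (ω : ℕ → ℝ) (z : ℂ) : ℂ :=
  ∑' i : ℕ, q i * Complex.exp (2 * Real.pi * Complex.I * z * (ω i : ℂ))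

/-- `μ` is the counting measure of the zero multiset of the entire function `Q`: the mass of
`μ` at each real point `x` is the multiplicity of `x` as a zero of `Q`. -/
def IsZeroCounting (Q : ℂ → ℂ) (μ : PPM ℝ) : Prop :=
  ∀ x : ℝ, ∃ (k : ℕ) (g : ℂ → ℂ), μ.mass x = k ∧ (∀ z, AnalyticAt ℂ g z) ∧ g x ≠ 0 ∧
    ∀ z : ℂ, Q z = (z - (x : ℂ)) ^ k * g z

open scoped Convolution FourierTransform Asymptotics ContDiff

/-! Test the identity `μ̂_A = Σ b_γ δ_γ` against `1_{x > 0} e^{2πizx}`, whose Fourier transform at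
`a` is `-1 / (2πi(z - a))`: the side of `ν` gives the exponential series, and the side of `μ_A`
gives the series of poles, which is `f' / f`. This function is neither continuous nor compactly
supported, so it is cut off near `x = T` and mollified at scale `1 / T` by an even mollifier `ρ`.
Since `ρ` is even, the value at the jump is `1 / 2`, which is where `πi b_0` comes from, and since
the Fourier transform of `ρ` is even, the terms of `a_n` and `a_{-n}` cancel to `O(n⁻²)` uniformly
in `T`, so that dominated convergence applies on both sides as `T → ∞`. -/

/-- The character `x ↦ e^{2πizx}` of `ℝ`, extended to complex frequencies `z`. -/
def planeWave (z : ℂ) (x : ℝ) : ℂ := Complex.exp (2 * Real.pi * Complex.I * (x : ℂ) * z)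

section PlaneWave

variable (z w : ℂ) (x y : ℝ)

lemma planeWave_zero_left : planeWave 0 x = 1 := by simp [planeWave]

lemma planeWave_zero_right : planeWave z 0 = 1 := by simp [planeWave]

lemma planeWave_add_right : planeWave z (x + y) = planeWave z x * planeWave z y := by
  simp only [planeWave, ofReal_add, ← Complex.exp_add]
  ring_nf

lemma planeWave_sub_left : planeWave (z - w) x = planeWave z x * planeWave (-w) x := by
  simp only [planeWave, ← Complex.exp_add]
  ring_nf

lemma planeWave_neg_neg : planeWave (-z) (-x) = planeWave z x := by simp [planeWave]

lemma planeWave_div_mul {T : ℝ} (hT : T ≠ 0) : planeWave (z / T) (T * x) = planeWave z x := by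
  have hT' : (T : ℂ) ≠ 0 := ofReal_ne_zero.2 hT
  simp only [planeWave, ofReal_mul]
  field_simp

lemma norm_planeWave : ‖planeWave z x‖ = Real.exp (-(2 * Real.pi * x * z.im)) := by
  rw [planeWave, Complex.norm_exp]
  congr 1
  simp

lemma contDiff_planeWave {n : ℕ∞} : ContDiff ℝ n (planeWave z) := by
  have : ContDiff ℝ n ((↑) : ℝ → ℂ) := ofRealCLM.contDiff
  unfold planeWave
  fun_prop

lemma continuous_planeWave : Continuous (planeWave z) := (contDiff_planeWave z (n := 0)).continuous

lemma hasDerivAt_planeWave :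
    HasDerivAt (planeWave z) (2 * Real.pi * Complex.I * z * planeWave z x) x := by
  have h : HasDerivAt (fun x : ℝ ↦ (2 * Real.pi * Complex.I * x * z : ℂ))
      (2 * Real.pi * Complex.I * z) x := by
    simpa using ((ofRealCLM.hasDerivAt (x := x)).const_mul (2 * Real.pi * Complex.I)).mul_const z
  unfold planeWave
  simpa only [mul_comm (Complex.exp _)] using h.cexp

variable {z w x y} {R Y : ℝ}

lemma norm_planeWave_le (hx : |x| ≤ R) (hz : |z.im| ≤ Y) :
    ‖planeWave z x‖ ≤ Real.exp (2 * Real.pi * R * Y) := by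
  have hxz : -(x * z.im) ≤ R * Y := calc
    -(x * z.im) ≤ |x| * |z.im| := (neg_le_abs _).trans_eq (abs_mul _ _)
    _ ≤ R * Y := mul_le_mul hx hz (abs_nonneg _) ((abs_nonneg _).trans hx)
  rw [norm_planeWave, Real.exp_le_exp]
  nlinarith [Real.pi_pos]

lemma norm_planeWave_sub_le (hx : |x| ≤ R) (hz : |z.im| ≤ Y) (hw : |w.im| ≤ Y) :
    ‖planeWave z x - planeWave w x‖ ≤
      2 * Real.pi * R * Real.exp (2 * Real.pi * R * Y) * ‖z - w‖ := by
  have hstrip : Convex ℝ {s : ℂ | |s.im| ≤ Y} := by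
    simpa only [abs_le, Set.ofPred_and] using
      (convex_halfSpace_im_ge (-Y)).inter (convex_halfSpace_im_le Y)
  have hderiv (s : ℂ) : HasDerivAt (planeWave · x)
      (2 * Real.pi * Complex.I * x * planeWave s x) s := by
    simpa only [planeWave, mul_comm (Complex.exp _), mul_one, id] using
      ((hasDerivAt_id s).const_mul (2 * Real.pi * Complex.I * x : ℂ)).cexp
  refine hstrip.norm_image_sub_le_of_norm_hasDerivWithin_le
    (fun s _ ↦ (hderiv s).hasDerivWithinAt) (fun s hs ↦ ?_) hw hz
  have hcoeff : ‖(2 * Real.pi * Complex.I * x : ℂ)‖ = 2 * Real.pi * |x| := by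
    simp [abs_of_pos Real.pi_pos]
  have hR : 0 ≤ R := (abs_nonneg x).trans hx
  rw [norm_mul, hcoeff]
  gcongr
  exact norm_planeWave_le hx hs

end PlaneWave

/-- The Fourier–Laplace transform `s ↦ ∫ g(x) e^{2πisx} dx` of `g`, which for real `s` is the
Fourier transform at `-s`. -/
def fourierLaplace (g : ℝ → ℂ) (s : ℂ) : ℂ := ∫ x, planeWave s x * g x

section FourierLaplace

variable {f g : ℝ → ℂ} {R Y : ℝ} {s t : ℂ}

lemma fourier_planeWave_mul (g : ℝ → ℂ) (z : ℂ) (a : ℝ) :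
    𝓕 (fun x ↦ planeWave z x * g x) a = fourierLaplace g (z - a) := by
  rw [Real.fourier_real_eq_integral_exp_smul]
  refine integral_congr_ae (.of_forall fun x ↦ ?_)
  have hchar : Complex.exp (((-2 * Real.pi * x * a : ℝ) : ℂ) * Complex.I) = planeWave (-a) x := by
    rw [planeWave]
    congr 1
    push_cast
    ring
  simp only [smul_eq_mul, hchar, planeWave_sub_left]
  ring

lemma fourierLaplace_zero (g : ℝ → ℂ) : fourierLaplace g 0 = ∫ x, g x := by
  simp [fourierLaplace, planeWave_zero_left]

lemma fourierLaplace_even (hg : g.Even) : (fourierLaplace g).Even := fun s ↦ by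
  rw [fourierLaplace, ← integral_neg_eq_self]
  simp only [planeWave_neg_neg, hg _, fourierLaplace]

lemma fourierLaplace_comp_mul_left (g : ℝ → ℂ) (s : ℂ) {T : ℝ} (hT : 0 < T) :
    fourierLaplace (fun x ↦ g (T * x)) s = (T : ℂ)⁻¹ * fourierLaplace g (s / T) := by
  have h := Measure.integral_comp_mul_left (fun x : ℝ ↦ planeWave (s / T) x * g x) T
  simpa only [planeWave_div_mul s _ hT.ne', abs_of_pos (inv_pos.2 hT), Complex.real_smul,
    ofReal_inv, fourierLaplace] using h

lemma norm_mul_le_of_support_subset {w : ℝ → ℂ} {B : ℝ}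
    (hR : Function.support g ⊆ closedBall 0 R) (hw : ∀ x, |x| ≤ R → ‖w x‖ ≤ B) (x : ℝ) :
    ‖w x * g x‖ ≤ B * ‖g x‖ := by
  by_cases hx : x ∈ closedBall 0 R
  · rw [norm_mul]
    gcongr
    exact hw x (mem_closedBall_zero_iff.1 hx)
  · simp [Function.notMem_support.1 (mt (@hR x) hx)]

lemma integrable_planeWave_mul (hg : Integrable g) (hR : Function.support g ⊆ closedBall 0 R)
    (s : ℂ) : Integrable fun x ↦ planeWave s x * g x :=
  (hg.norm.const_mul (Real.exp (2 * Real.pi * R * |s.im|))).mono'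
    ((continuous_planeWave s).aestronglyMeasurable.mul hg.1) <| .of_forall <|
      norm_mul_le_of_support_subset hR fun _ hx ↦ norm_planeWave_le hx le_rfl

lemma norm_fourierLaplace_le (hg : Integrable g) (hR : Function.support g ⊆ closedBall 0 R)
    (hs : |s.im| ≤ Y) : ‖fourierLaplace g s‖ ≤ Real.exp (2 * Real.pi * R * Y) * ∫ x, ‖g x‖ := by
  rw [fourierLaplace, ← integral_const_mul]
  exact norm_integral_le_of_norm_le (hg.norm.const_mul _) <| .of_forall <|
    norm_mul_le_of_support_subset hR fun _ hx ↦ norm_planeWave_le hx hs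

lemma norm_fourierLaplace_sub_le (hg : Integrable g) (hR : Function.support g ⊆ closedBall 0 R)
    (hs : |s.im| ≤ Y) (ht : |t.im| ≤ Y) :
    ‖fourierLaplace g s - fourierLaplace g t‖ ≤
      2 * Real.pi * R * Real.exp (2 * Real.pi * R * Y) * ‖s - t‖ * ∫ x, ‖g x‖ := by
  rw [fourierLaplace, fourierLaplace, ← integral_sub (integrable_planeWave_mul hg hR s)
    (integrable_planeWave_mul hg hR t), ← integral_const_mul]
  simp only [← sub_mul]
  exact norm_integral_le_of_norm_le (hg.norm.const_mul _) <| .of_forall <|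
    norm_mul_le_of_support_subset hR fun _ hx ↦ norm_planeWave_sub_le hx hs ht

lemma fourierLaplace_deriv (hg : ContDiff ℝ 1 g) (hc : HasCompactSupport g) (s : ℂ) :
    fourierLaplace (deriv g) s = -(2 * Real.pi * Complex.I * s) * fourierLaplace g s := by
  have hw := continuous_planeWave s
  have hint {h : ℝ → ℂ} (hh : Continuous h) (hhc : HasCompactSupport h) : Integrable h :=
    hh.integrable_of_hasCompactSupport hhc
  rw [fourierLaplace, integral_mul_deriv_eq_deriv_mul_of_integrable
    (fun x _ ↦ hasDerivAt_planeWave s x)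
    (fun x _ ↦ (hg.differentiable one_ne_zero x).hasDerivAt)
    (hint (hw.mul (hg.continuous_deriv le_rfl)) hc.deriv.mul_left)
    (hint ((continuous_const.mul hw).mul hg.continuous) hc.mul_left)
    (hint (hw.mul hg.continuous) hc.mul_left), neg_mul, fourierLaplace, ← integral_const_mul]
  simp only [mul_assoc]

lemma fourierLaplace_convolution (hf : Integrable fun x ↦ planeWave s x * f x)
    (hg : Integrable fun x ↦ planeWave s x * g x) :
    fourierLaplace (f ⋆[ContinuousLinearMap.mul ℝ ℂ] g) s =
      fourierLaplace f s * fourierLaplace g s := by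
  have hconv (x : ℝ) : planeWave s x * (f ⋆[ContinuousLinearMap.mul ℝ ℂ] g) x =
      ((fun x ↦ planeWave s x * f x) ⋆[ContinuousLinearMap.mul ℝ ℂ]
        fun x ↦ planeWave s x * g x) x := by
    simp only [convolution_def, ContinuousLinearMap.mul_apply', ← integral_const_mul]
    refine integral_congr_ae (.of_forall fun y ↦ ?_)
    have hsplit : planeWave s x = planeWave s y * planeWave s (x - y) := by
      rw [← planeWave_add_right, add_sub_cancel]
    simp only [hsplit]
    ring
  simp only [fourierLaplace, hconv]
  exact integral_convolution (ContinuousLinearMap.mul ℝ ℂ) hf hg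

lemma fourierLaplace_indicator_Ioc {T : ℝ} (hT : 0 ≤ T) (hs : s ≠ 0) :
    fourierLaplace ((Set.Ioc 0 T).indicator 1) s =
      (planeWave s T - 1) / (2 * Real.pi * Complex.I * s) := by
  have hmul (x : ℝ) : planeWave s x * (Set.Ioc 0 T).indicator 1 x =
      (Set.Ioc 0 T).indicator (fun x : ℝ ↦ Complex.exp (2 * Real.pi * Complex.I * s * x)) x := by
    by_cases hx : x ∈ Set.Ioc 0 T <;> simp [hx, planeWave, mul_right_comm]
  simp only [fourierLaplace, hmul]
  rw [integral_indicator measurableSet_Ioc, ← intervalIntegral.integral_of_le hT,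
    integral_exp_mul_complex (mul_ne_zero two_pi_I_ne_zero hs)]
  simp [planeWave, mul_right_comm]

end FourierLaplace

/-- A smooth even approximate identity at scale `1`, normalised to have support in `[-1, 1]`. -/
structure IsEvenMollifier (ρ : ℝ → ℂ) : Prop where
  contDiff : ContDiff ℝ ∞ ρ
  even : ρ.Even
  support_subset : Function.support ρ ⊆ closedBall 0 1
  integral_eq_one : ∫ x, ρ x = 1

lemma exists_isEvenMollifier : ∃ ρ : ℝ → ℂ, IsEvenMollifier ρ := by
  let b : ContDiffBump (0 : ℝ) := ⟨1 / 2, 1, by norm_num, by norm_num⟩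
  refine ⟨fun x ↦ (b.normed volume x : ℂ), ?_, fun x ↦ ?_, fun x hx ↦ ?_, ?_⟩
  · exact ofRealCLM.contDiff.comp b.contDiff_normed
  · rw [b.normed_neg]
  · have hx' : x ∈ Function.support (b.normed volume) := by simpa using hx
    rw [b.support_normed_eq] at hx'
    exact ball_subset_closedBall hx'
  · exact integral_complex_ofReal.trans (congrArg ofReal b.integral_normed)

/-- The indicator function of `(0, R]` mollified by `ρ`. -/
def smoothedIndicator (ρ : ℝ → ℂ) (R : ℝ) : ℝ → ℂ :=
  ρ ⋆[ContinuousLinearMap.mul ℝ ℂ] (Set.Ioc 0 R).indicator 1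

/-- The compactly supported smooth approximation of `1_{x > 0} e^{2πizx}` as `T → ∞`: its jump at
`0` is smoothed at scale `1 / T`, and it is cut off near `x = T`. -/
def truncatedWave (ρ : ℝ → ℂ) (T : ℝ) (z : ℂ) (x : ℝ) : ℂ :=
  planeWave z x * smoothedIndicator ρ (T ^ 2) (T * x)

lemma integrable_indicator_Ioc (R : ℝ) : Integrable ((Set.Ioc 0 R).indicator (1 : ℝ → ℂ)) :=
  (integrable_indicator_iff measurableSet_Ioc).2 (integrableOn_const (by simp))

lemma smoothedIndicator_apply (ρ : ℝ → ℂ) (R x : ℝ) :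
    smoothedIndicator ρ R x = ∫ t in Set.Ico (x - R) x, ρ t := by
  rw [smoothedIndicator, convolution_def, ← integral_indicator measurableSet_Ico]
  refine integral_congr_ae (.of_forall fun t ↦ ?_)
  have hmem : x - t ∈ Set.Ioc 0 R ↔ t ∈ Set.Ico (x - R) x := by
    simp only [Set.mem_Ioc, Set.mem_Ico, sub_pos, sub_le_comm, and_comm]
  by_cases ht : t ∈ Set.Ico (x - R) x <;> simp [hmem, ht]

namespace IsEvenMollifier

variable {ρ : ℝ → ℂ} (hρ : IsEvenMollifier ρ) {R T : ℝ}

include hρ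

lemma eq_zero {x : ℝ} (hx : 1 < |x|) : ρ x = 0 :=
  Function.notMem_support.1 fun h ↦
    hx.not_ge (mem_closedBall_zero_iff.1 (hρ.support_subset h))

lemma hasCompactSupport : HasCompactSupport ρ :=
  .of_support_subset_isCompact (isCompact_closedBall 0 1) hρ.support_subset

lemma integrable : Integrable ρ :=
  hρ.contDiff.continuous.integrable_of_hasCompactSupport hρ.hasCompactSupport

lemma setIntegral_Iio_zero : ∫ x in Set.Iio 0, ρ x = 1 / 2 := by
  have hsymm : ∫ x in Set.Iic 0, ρ x = ∫ x in Set.Ioi 0, ρ x := by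
    simpa only [hρ.even _, neg_zero] using integral_comp_neg_Iic 0 ρ
  have hsum := intervalIntegral.integral_Iic_add_Ioi (b := 0) hρ.integrable.integrableOn
    hρ.integrable.integrableOn
  rw [hρ.integral_eq_one, ← hsymm, integral_Iic_eq_integral_Iio] at hsum
  linear_combination hsum / 2

lemma norm_smoothedIndicator_le (R x : ℝ) : ‖smoothedIndicator ρ R x‖ ≤ ∫ t, ‖ρ t‖ := by
  rw [smoothedIndicator_apply]
  exact (norm_integral_le_integral_norm _).trans
    (setIntegral_le_integral hρ.integrable.norm (.of_forall fun _ ↦ norm_nonneg _))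

lemma smoothedIndicator_eq_zero (R : ℝ) {x : ℝ} (hx : x ≤ -1) : smoothedIndicator ρ R x = 0 := by
  rw [smoothedIndicator_apply]
  refine setIntegral_eq_zero_of_forall_eq_zero fun t ht ↦ hρ.eq_zero ?_
  exact lt_abs.2 (.inr (by linarith [ht.2]))

lemma smoothedIndicator_eq_one {x : ℝ} (hx : 1 < x) (hxR : x + 1 ≤ R) :
    smoothedIndicator ρ R x = 1 := by
  rw [smoothedIndicator_apply, ← hρ.integral_eq_one]
  refine setIntegral_eq_integral_of_forall_compl_eq_zero fun t ht ↦ hρ.eq_zero ?_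
  contrapose! ht
  exact ⟨by linarith [(abs_le.1 ht).1], by linarith [(abs_le.1 ht).2]⟩

lemma smoothedIndicator_zero (hR : 1 ≤ R) : smoothedIndicator ρ R 0 = 1 / 2 := by
  rw [smoothedIndicator_apply, ← hρ.setIntegral_Iio_zero]
  refine (setIntegral_eq_of_subset_of_forall_sdiff_eq_zero measurableSet_Iio
    (fun t ht ↦ ht.2) fun t ht ↦ hρ.eq_zero ?_).symm
  have : t < 0 - R := by
    by_contra! h
    exact ht.2 ⟨h, ht.1⟩
  exact lt_abs.2 (.inr (by linarith))

lemma tendsto_smoothedIndicator (x : ℝ) :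
    Tendsto (fun T : ℝ ↦ smoothedIndicator ρ (T ^ 2) (T * x)) atTop
      (𝓝 ((Set.Ioi 0).indicator 1 x + (Pi.single 0 (1 / 2) : ℝ → ℂ) x)) := by
  apply tendsto_const_nhds.congr'
  rcases lt_trichotomy x 0 with hx | rfl | hx
  · filter_upwards [eventually_ge_atTop (-x)⁻¹] with T hT
    have hTx : 1 ≤ T * -x := (inv_le_iff_one_le_mul₀ (neg_pos.2 hx)).1 hT
    simp [hρ.smoothedIndicator_eq_zero _ (by linarith : T * x ≤ -1), hx.le, hx.ne]
  · filter_upwards [eventually_ge_atTop 1] with T hT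
    simp [hρ.smoothedIndicator_zero (one_le_pow₀ hT : 1 ≤ T ^ 2)]
  · filter_upwards [eventually_gt_atTop x⁻¹, eventually_ge_atTop (x + 1), eventually_ge_atTop 1]
      with T hT hTx hT1
    have hTx' : 1 < T * x := (inv_lt_iff_one_lt_mul₀ hx).1 hT
    simp [hρ.smoothedIndicator_eq_one hTx' (by nlinarith [hT1] : T * x + 1 ≤ T ^ 2), hx, hx.ne']

lemma contDiff_smoothedIndicator (R : ℝ) : ContDiff ℝ ∞ (smoothedIndicator ρ R) := by
  have hind := (integrable_indicator_Ioc R).locallyIntegrable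
  exact hρ.hasCompactSupport.contDiff_convolution_left _ hρ.contDiff hind

lemma contDiff_truncatedWave (T : ℝ) (z : ℂ) : ContDiff ℝ ∞ (truncatedWave ρ T z) :=
  (contDiff_planeWave z).mul <|
    (hρ.contDiff_smoothedIndicator (T ^ 2)).comp (contDiff_const.mul contDiff_id)

lemma hasCompactSupport_smoothedIndicator (R : ℝ) :
    HasCompactSupport (smoothedIndicator ρ R) :=
  hρ.hasCompactSupport.convolution _ <| .of_support_subset_isCompact isCompact_Icc
    (Set.support_indicator_subset.trans Set.Ioc_subset_Icc_self)

lemma hasCompactSupport_truncatedWave (hT : T ≠ 0) (z : ℂ) :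
    HasCompactSupport (truncatedWave ρ T z) :=
  ((hρ.hasCompactSupport_smoothedIndicator (T ^ 2)).comp_homeomorph
    (Homeomorph.mulLeft₀ T hT)).mul_left

lemma fourierLaplace_smoothedIndicator (hR : 0 ≤ R) {s : ℂ} (hs : s ≠ 0) :
    fourierLaplace (smoothedIndicator ρ R) s =
      fourierLaplace ρ s * ((planeWave s R - 1) / (2 * Real.pi * Complex.I * s)) := by
  have hsupp : Function.support ((Set.Ioc 0 R).indicator (1 : ℝ → ℂ)) ⊆ closedBall 0 R :=
    Set.support_indicator_subset.trans fun x hx ↦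
      mem_closedBall_zero_iff.2 (abs_le.2 ⟨by linarith [hx.1], hx.2⟩)
  rw [smoothedIndicator, fourierLaplace_convolution
    (integrable_planeWave_mul hρ.integrable hρ.support_subset s)
    (integrable_planeWave_mul (integrable_indicator_Ioc R) hsupp s),
    fourierLaplace_indicator_Ioc hR hs]

end IsEvenMollifier

/-- The bounds on the strip `|Im s| ≤ Y` enjoyed by the Fourier–Laplace transform of a compactly
supported `C¹` function. -/
structure IsStripBounded (H : ℂ → ℂ) (Y C : ℝ) : Prop where
  norm_le : ∀ ⦃s⦄, |s.im| ≤ Y → ‖H s‖ ≤ C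
  norm_mul_le : ∀ ⦃s⦄, |s.im| ≤ Y → ‖s * H s‖ ≤ C
  norm_mul_sub_le : ∀ ⦃s t⦄, |s.im| ≤ Y → |t.im| ≤ Y → ‖s * H s - t * H t‖ ≤ C * ‖s - t‖

lemma norm_inv_two_pi_I_le_one : ‖(2 * Real.pi * Complex.I : ℂ)⁻¹‖ ≤ 1 := by
  have hnorm : ‖(2 * Real.pi * Complex.I : ℂ)‖ = 2 * Real.pi := by simp [abs_of_pos Real.pi_pos]
  rw [norm_inv, hnorm]
  exact inv_le_one_of_one_le₀ (by linarith [Real.two_le_pi])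

lemma exists_isStripBounded_fourierLaplace {g : ℝ → ℂ} {R : ℝ} (hg : ContDiff ℝ 1 g)
    (hR : Function.support g ⊆ closedBall 0 R) (Y : ℝ) :
    ∃ C, IsStripBounded (fourierLaplace g) Y C := by
  have hc : HasCompactSupport g := .of_support_subset_isCompact (isCompact_closedBall 0 R) hR
  have hR' : Function.support (deriv g) ⊆ closedBall 0 R :=
    (support_deriv_subset.trans (closure_minimal hR isClosed_closedBall))
  have hgi : Integrable g := hg.continuous.integrable_of_hasCompactSupport hc
  have hgi' : Integrable (deriv g) :=
    (hg.continuous_deriv le_rfl).integrable_of_hasCompactSupport hc.deriv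
  have hmul (s : ℂ) :
      s * fourierLaplace g s = -(2 * Real.pi * Complex.I)⁻¹ * fourierLaplace (deriv g) s := by
    rw [fourierLaplace_deriv hg hc]
    field_simp [two_pi_I_ne_zero]
  have hcoeff : ‖-(2 * Real.pi * Complex.I : ℂ)⁻¹‖ ≤ 1 :=
    (norm_neg _).trans_le norm_inv_two_pi_I_le_one
  set E := Real.exp (2 * Real.pi * R * Y)
  set J := ∫ x, ‖deriv g x‖
  refine ⟨max (E * ∫ x, ‖g x‖) (max (E * J) (2 * Real.pi * R * E * J)), ?_, ?_, ?_⟩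
  · exact fun s hs ↦ (norm_fourierLaplace_le hgi hR hs).trans (le_max_left _ _)
  · intro s hs
    rw [hmul, norm_mul]
    refine (mul_le_of_le_one_left (norm_nonneg _) hcoeff).trans ?_
    exact (norm_fourierLaplace_le hgi' hR' hs).trans
      ((le_max_left _ _).trans (le_max_right _ _))
  · intro s t hs ht
    rw [hmul, hmul, ← mul_sub, norm_mul]
    refine (mul_le_of_le_one_left (norm_nonneg _) hcoeff).trans
      ((norm_fourierLaplace_sub_le hgi' hR' hs ht).trans ?_)
    rw [mul_right_comm]
    gcongr
    exact (le_max_right _ _).trans (le_max_right _ _)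

lemma continuous_fourierLaplace {g : ℝ → ℂ} {R : ℝ} (hg : Integrable g)
    (hR : Function.support g ⊆ closedBall 0 R) : Continuous (fourierLaplace g) := by
  refine continuous_iff_continuousAt.2 fun s ↦ ?_
  have hstrip : ∀ᶠ t : ℂ in 𝓝 s, |t.im| ≤ |s.im| + 1 :=
    (continuous_abs.comp Complex.continuous_im).continuousAt.eventually_le_const (lt_add_one _)
  rw [ContinuousAt, tendsto_iff_norm_sub_tendsto_zero]
  refine squeeze_zero' (.of_forall fun _ ↦ norm_nonneg _) (hstrip.mono fun t ht ↦
    norm_fourierLaplace_sub_le hg hR ht (le_add_of_nonneg_right zero_le_one)) ?_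
  have hsub : Tendsto (fun t ↦ ‖t - s‖) (𝓝 s) (𝓝 0) :=
    tendsto_iff_norm_sub_tendsto_zero.1 tendsto_id
  simpa using (hsub.const_mul _).mul_const _

/-- The value at `a` of the Fourier transform of `truncatedWave ρ T z`, as a function of
`u = z - a` and of the Fourier–Laplace transform `H` of `ρ`. As `T → ∞` it tends to the simple
pole `-1 / (2πiu)`. -/
def regularizedPole (H : ℂ → ℂ) (T : ℝ) (u : ℂ) : ℂ :=
  H (u / T) * ((planeWave u T - 1) / (2 * Real.pi * Complex.I * u))

lemma IsEvenMollifier.fourier_truncatedWave {ρ : ℝ → ℂ} (hρ : IsEvenMollifier ρ) {T : ℝ}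
    (hT : 0 < T) {z : ℂ} {a : ℝ} (hza : z - a ≠ 0) :
    𝓕 (truncatedWave ρ T z) a = regularizedPole (fourierLaplace ρ) T (z - a) := by
  have hT' : (T : ℂ) ≠ 0 := ofReal_ne_zero.2 hT.ne'
  unfold truncatedWave
  rw [fourier_planeWave_mul, fourierLaplace_comp_mul_left _ _ hT,
    hρ.fourierLaplace_smoothedIndicator (sq_nonneg T) (div_ne_zero hza hT'), sq,
    planeWave_div_mul _ _ hT.ne', regularizedPole]
  field_simp [two_pi_I_ne_zero]

lemma mul_exp_neg_mul_le_inv {c : ℝ} (hc : 0 < c) (x : ℝ) : x * Real.exp (-(c * x)) ≤ c⁻¹ := by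
  rw [Real.exp_neg, ← div_eq_mul_inv, div_le_iff₀ (Real.exp_pos _), inv_mul_eq_div, le_div_iff₀ hc]
  linarith [Real.add_one_le_exp (c * x)]

section RegularizedPole

variable {H : ℂ → ℂ} {T y C : ℝ} {u v : ℂ}

lemma tendsto_regularizedPole (hH : Tendsto H (𝓝 0) (𝓝 1)) (hu : 0 < u.im) :
    Tendsto (regularizedPole H · u) atTop (𝓝 (-1 / (2 * Real.pi * Complex.I * u))) := by
  have hdiv : Tendsto (fun T : ℝ ↦ u / T) atTop (𝓝 0) := by
    simpa [div_eq_mul_inv] using (tendsto_inv_atTop_zero (𝕜 := ℝ)).ofReal.const_mul u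
  have hwave : Tendsto (planeWave u) atTop (𝓝 0) := by
    rw [tendsto_zero_iff_norm_tendsto_zero]
    simp only [norm_planeWave]
    exact Real.tendsto_exp_neg_atTop_nhds_zero.comp <|
      (tendsto_id.const_mul_atTop Real.two_pi_pos).atTop_mul_const hu
  simpa [regularizedPole] using (hH.comp hdiv).mul ((hwave.sub_const 1).div_const _)

lemma abs_div_im_le (hT : 1 ≤ T) (hu : |u.im| ≤ y) : |(u / T).im| ≤ y := by
  rw [div_ofReal_im, abs_div, abs_of_pos (zero_lt_one.trans_le hT)]
  exact (div_le_self (abs_nonneg _) hT).trans hu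

namespace IsStripBounded

variable (hH : IsStripBounded H y C)

include hH

lemma nonneg (hy : 0 ≤ y) : 0 ≤ C :=
  (norm_nonneg _).trans (hH.norm_le (s := 0) (by simpa using hy))

lemma norm_mul_planeWave_sub_one_le (hT : 1 ≤ T) (hy : 0 ≤ y) (hu : u.im = y) :
    ‖H (u / T) * (planeWave u T - 1)‖ ≤ C * 2 := by
  have hwave : ‖planeWave u T‖ ≤ 1 := by
    rw [norm_planeWave, hu, Real.exp_le_one_iff, neg_nonpos]
    positivity
  have hC := hH.nonneg hy
  rw [norm_mul]
  gcongr
  · exact hH.norm_le (abs_div_im_le hT (by rw [hu, abs_of_nonneg hy]))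
  · linarith [norm_sub_le (planeWave u T) 1, norm_one (α := ℂ)]

lemma norm_mul_planeWave_le (hT : 1 ≤ T) (hy : 0 < y) (hu : u.im = y) :
    ‖u * H (u / T) * planeWave u T‖ ≤ C * y⁻¹ := by
  have hT0 : 0 < T := by positivity
  have hscale : u * H (u / T) = T * (u / T * H (u / T)) := by
    rw [← mul_assoc, mul_div_cancel₀ _ (ofReal_ne_zero.2 hT0.ne')]
  have hdecay : T * Real.exp (-(2 * Real.pi * y * T)) ≤ y⁻¹ :=
    (mul_exp_neg_mul_le_inv (by positivity) T).trans <|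
      inv_anti₀ hy (le_mul_of_one_le_left hy.le (by linarith [Real.two_le_pi]))
  calc ‖u * H (u / T) * planeWave u T‖
      = ‖u / T * H (u / T)‖ * (T * Real.exp (-(2 * Real.pi * y * T))) := by
        rw [hscale, norm_mul, norm_mul, norm_planeWave, hu, norm_real, Real.norm_of_nonneg hT0.le,
          mul_right_comm (2 * Real.pi)]
        ring
    _ ≤ C * y⁻¹ := mul_le_mul (hH.norm_mul_le (abs_div_im_le hT (by rw [hu, abs_of_pos hy])))
        hdecay (by positivity) (hH.nonneg hy.le)

lemma norm_mul_add_mul_le (heven : H.Even) (hT : 1 ≤ T) (hu : |u.im| ≤ y) (hv : |v.im| ≤ y) :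
    ‖u * H (u / T) + v * H (v / T)‖ ≤ C * ‖u + v‖ := by
  have hT0 : (T : ℂ) ≠ 0 := ofReal_ne_zero.2 (by positivity)
  have hodd : u * H (u / T) + v * H (v / T) =
      T * (u / T * H (u / T) - -v / T * H (-v / T)) := by
    rw [neg_div, heven]
    field_simp
    ring
  calc ‖u * H (u / T) + v * H (v / T)‖
      = ‖(T : ℂ)‖ * ‖u / T * H (u / T) - -v / T * H (-v / T)‖ := by rw [hodd, norm_mul]
    _ ≤ ‖(T : ℂ)‖ * (C * ‖u / T - -v / T‖) := by
        gcongr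
        exact hH.norm_mul_sub_le (abs_div_im_le hT hu) (abs_div_im_le hT (by simpa using hv))
    _ = C * ‖u + v‖ := by
        rw [← sub_div, sub_neg_eq_add, norm_div]
        field_simp [norm_ne_zero_iff.2 hT0]

/-- Each pole is only `O(‖u‖⁻¹)`; for `v ≈ -u` the leading terms cancel because `s ↦ s * H s` is
odd. -/
lemma norm_regularizedPole_add_le (heven : H.Even) (hy : 0 < y) (hT : 1 ≤ T) (hu : u.im = y)
    (hv : v.im = y) :
    ‖regularizedPole H T u + regularizedPole H T v‖ ≤
      C * (5 * ‖u + v‖ + 2 * y⁻¹) * (‖u‖ * ‖v‖)⁻¹ := by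
  have ne_zero {w : ℂ} (hw : w.im = y) : w ≠ 0 := by
    rintro rfl
    exact hy.ne hw
  set G : ℂ → ℂ := fun w ↦ H (w / T) * (planeWave w T - 1)
  set S : ℂ → ℂ := fun w ↦ w * H (w / T)
  have hsplit : regularizedPole H T u + regularizedPole H T v =
      (2 * Real.pi * Complex.I)⁻¹ * (u * v)⁻¹ * ((u + v) * (G u + G v) -
        (S u * planeWave u T + S v * planeWave v T) + (S u + S v)) := by
    have := ne_zero hu
    have := ne_zero hv
    simp only [regularizedPole, S, G]
    field_simp [two_pi_I_ne_zero]
    ring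
  have hG := norm_add_le_of_le (hH.norm_mul_planeWave_sub_one_le hT hy.le hu)
    (hH.norm_mul_planeWave_sub_one_le hT hy.le hv)
  have hwave := norm_add_le_of_le (hH.norm_mul_planeWave_le hT hy hu)
    (hH.norm_mul_planeWave_le hT hy hv)
  have hodd := hH.norm_mul_add_mul_le heven hT (by rw [hu, abs_of_pos hy])
    (by rw [hv, abs_of_pos hy])
  calc ‖regularizedPole H T u + regularizedPole H T v‖
      ≤ 1 * (‖u‖ * ‖v‖)⁻¹ * (‖u + v‖ * (C * 2 + C * 2) + (C * y⁻¹ + C * y⁻¹) + C * ‖u + v‖) := by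
        rw [hsplit, norm_mul, norm_mul, norm_inv (u * v), norm_mul u v]
        gcongr
        · exact norm_inv_two_pi_I_le_one
        · refine norm_add_le_of_le (norm_sub_le_of_le ?_ hwave) hodd
          rw [norm_mul]
          gcongr
    _ = C * (5 * ‖u + v‖ + 2 * y⁻¹) * (‖u‖ * ‖v‖)⁻¹ := by ring

end IsStripBounded

end RegularizedPole

/-- The sequence `b` stays at bounded distance from an arithmetic progression with nonzero
step `d`. -/
structure IsNearArithmetic (b : ℕ → ℂ) (d : ℂ) : Prop where
  step_ne_zero : d ≠ 0
  sub_isBigO : (fun n ↦ b n - n * d) =O[atTop] (1 : ℕ → ℝ)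

namespace IsNearArithmetic

variable {b c : ℕ → ℂ} {d : ℂ} {w : ℕ → ℝ}

lemma const_sub (hb : IsNearArithmetic b d) (z : ℂ) :
    IsNearArithmetic (fun n ↦ z - b n) (-d) where
  step_ne_zero := neg_ne_zero.2 hb.step_ne_zero
  sub_isBigO := by
    refine ((Asymptotics.isBigO_const_const z one_ne_zero atTop).sub
      hb.sub_isBigO).congr_left fun n ↦ ?_
    ring

lemma add_isBigO_one (hb : IsNearArithmetic b d) (hc : IsNearArithmetic c (-d)) :
    (fun n ↦ b n + c n) =O[atTop] (1 : ℕ → ℝ) :=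
  (hb.sub_isBigO.add hc.sub_isBigO).congr_left fun n ↦ by ring

lemma inv_isBigO (hb : IsNearArithmetic b d) :
    (fun n ↦ (b n)⁻¹) =O[atTop] fun n : ℕ ↦ (n : ℝ)⁻¹ := by
  have hnat : Tendsto (fun n : ℕ ↦ ‖(n : ℝ)‖) atTop atTop := by
    simpa using tendsto_natCast_atTop_atTop (R := ℝ)
  have hprog : (fun n : ℕ ↦ (n : ℝ)) =O[atTop] fun n : ℕ ↦ n * d := by
    refine Asymptotics.IsBigO.of_bound ‖d‖⁻¹ (.of_forall fun n ↦ ?_)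
    simp [mul_comm, hb.step_ne_zero]
  have hequiv : Asymptotics.IsEquivalent atTop b fun n : ℕ ↦ n * d :=
    hb.sub_isBigO.trans_isLittleO
      (((Asymptotics.isLittleO_const_left_of_ne one_ne_zero).2 hnat).trans_isBigO hprog)
  refine hequiv.inv.isBigO.trans (Asymptotics.IsBigO.of_bound ‖d‖⁻¹ (.of_forall fun n ↦ ?_))
  simp [mul_comm]

lemma summable_mul_inv (hb : IsNearArithmetic b d) (hc : IsNearArithmetic c (-d))
    (hw : w =O[atTop] (1 : ℕ → ℝ)) : Summable fun n ↦ w n * (‖b n‖ * ‖c n‖)⁻¹ := by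
  refine summable_of_isBigO_nat (Real.summable_nat_pow_inv.2 one_lt_two) ?_
  simpa only [mul_inv, sq, norm_inv, Pi.one_apply, one_mul] using
    hw.mul (hb.inv_isBigO.norm_left.mul hc.inv_isBigO.norm_left)

lemma summable_one_div_add_one_div {z : ℂ} (hb : IsNearArithmetic b d)
    (hc : IsNearArithmetic c (-d)) (hzb : ∀ n, z - b n ≠ 0) (hzc : ∀ n, z - c n ≠ 0) :
    Summable fun n ↦ 1 / (z - b n) + 1 / (z - c n) := by
  refine .of_norm_bounded ((hb.const_sub z).summable_mul_inv (hc.const_sub z)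
    ((hb.const_sub z).add_isBigO_one (hc.const_sub z)).norm_left) fun n ↦ le_of_eq ?_
  rw [one_div_add_one_div (hzb n) (hzc n), norm_div, norm_mul, div_eq_mul_inv]

lemma summable_norm_mul_sub_one (hb : IsNearArithmetic b d) (hc : IsNearArithmetic c (-d))
    (hb0 : ∀ n, b n ≠ 0) (hc0 : ∀ n, c n ≠ 0) (z : ℂ) :
    Summable fun n ↦ ‖(1 - z / b n) * (1 - z / c n) - 1‖ := by
  have hnum : (fun n ↦ ‖z * (z - (b n + c n))‖) =O[atTop] (1 : ℕ → ℝ) :=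
    (((Asymptotics.isBigO_const_const z one_ne_zero atTop).sub
      (hb.add_isBigO_one hc)).const_mul_left z).norm_left
  refine (hb.summable_mul_inv hc hnum).congr fun n ↦ ?_
  rw [← norm_mul, ← norm_inv, ← norm_mul]
  congr 1
  field_simp [hb0 n, hc0 n]
  ring

end IsNearArithmetic

section CanonicalProduct

variable {b c : ℕ → ℂ} {d p z : ℂ} {f : ℂ → ℂ}

lemma one_sub_div_ne_zero (hp : p ≠ 0) (hz : z - p ≠ 0) : 1 - z / p ≠ 0 := by
  rw [one_sub_div hp, ← neg_sub]
  exact div_ne_zero (neg_ne_zero.2 hz) hp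

lemma logDeriv_one_sub_div (hp : p ≠ 0) : logDeriv (fun z ↦ 1 - z / p) z = 1 / (z - p) := by
  have hderiv : deriv (fun z ↦ 1 - z / p) z = -(1 / p) := by simp
  rw [logDeriv_apply, hderiv, one_sub_div hp, div_div_eq_mul_div, neg_mul, one_div_mul_cancel hp,
    ← neg_sub z p, neg_div_neg_eq]

variable (hp : p ≠ 0) (hzp : z - p ≠ 0) (hb0 : ∀ n, b n ≠ 0) (hc0 : ∀ n, c n ≠ 0)
  (hzb : ∀ n, z - b n ≠ 0) (hzc : ∀ n, z - c n ≠ 0)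

include hp hzp hb0 hc0 hzb hzc

lemma logDeriv_canonicalProduct_partial (N : ℕ) :
    logDeriv (fun z ↦ (1 - z / p) * ∏ n ∈ Finset.range N, ((1 - z / b n) * (1 - z / c n))) z =
      1 / (z - p) + ∑ n ∈ Finset.range N, (1 / (z - b n) + 1 / (z - c n)) := by
  have hfactor (n : ℕ) : (1 - z / b n) * (1 - z / c n) ≠ 0 :=
    mul_ne_zero (one_sub_div_ne_zero (hb0 n) (hzb n)) (one_sub_div_ne_zero (hc0 n) (hzc n))
  rw [logDeriv_mul (f := fun z ↦ 1 - z / p) z (one_sub_div_ne_zero hp hzp)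
    (Finset.prod_ne_zero_iff.2 fun n _ ↦ hfactor n) (by fun_prop) (by fun_prop),
    logDeriv_one_sub_div hp, logDeriv_prod (fun n _ ↦ hfactor n) (by fun_prop)]
  congr 1
  refine Finset.sum_congr rfl fun n _ ↦ ?_
  rw [logDeriv_mul (f := fun z ↦ 1 - z / b n) z (one_sub_div_ne_zero (hb0 n) (hzb n))
    (one_sub_div_ne_zero (hc0 n) (hzc n)) (by fun_prop) (by fun_prop),
    logDeriv_one_sub_div (hb0 n), logDeriv_one_sub_div (hc0 n)]

variable (hb : IsNearArithmetic b d) (hc : IsNearArithmetic c (-d))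

include hb hc

lemma canonicalProduct_ne_zero {l : ℂ} (hf : Tendsto (fun N ↦ (1 - z / p) *
      ∏ n ∈ Finset.range N, ((1 - z / b n) * (1 - z / c n))) atTop (𝓝 l)) :
    l ≠ 0 := by
  have hsum := hb.summable_norm_mul_sub_one hc hb0 hc0 z
  have hprod := (multipliable_one_add_of_summable hsum).hasProd.tendsto_prod_nat
  have hne := tprod_one_add_ne_zero_of_summable (R := ℂ) (fun n ↦ ?_) hsum
  · simp only [add_sub_cancel] at hprod hne
    rw [tendsto_nhds_unique hf (hprod.const_mul _)]
    exact mul_ne_zero (one_sub_div_ne_zero hp hzp) hne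
  · rw [add_sub_cancel]
    exact mul_ne_zero (one_sub_div_ne_zero (hb0 n) (hzb n)) (one_sub_div_ne_zero (hc0 n) (hzc n))

lemma logDeriv_canonicalProduct
    (hf : TendstoLocallyUniformly (fun (N : ℕ) (z : ℂ) ↦ (1 - z / p) *
      ∏ n ∈ Finset.range N, ((1 - z / b n) * (1 - z / c n))) f atTop) :
    logDeriv f z = 1 / (z - p) + ∑' n, (1 / (z - b n) + 1 / (z - c n)) := by
  have hlim := logDeriv_tendsto isOpen_univ (Set.mem_univ z) hf.tendstoLocallyUniformlyOn
    (.of_forall fun N ↦ by fun_prop)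
    (canonicalProduct_ne_zero hp hzp hb0 hc0 hzb hzc hb hc
      (hf.tendstoLocallyUniformlyOn.tendsto_at (Set.mem_univ z)))
  simp only [logDeriv_canonicalProduct_partial hp hzp hb0 hc0 hzb hzc] at hlim
  exact tendsto_nhds_unique hlim
    ((hb.summable_one_div_add_one_div hc hzb hzc).hasSum.tendsto_sum_nat.const_add _)

end CanonicalProduct

section PurePoint

lemma summable_norm_mass_subtype {V : Type*} {ν : PPM V} {A : Set V} (h : ν.var A < ⊤) :
    Summable fun x : A ↦ ‖ν.mass x‖ :=
  tsum_enorm_ne_top_iff_summable_norm.1 h.ne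

variable {ν : PPM ℝ} {z : ℂ}

lemma summable_indicator_ball_norm_mul_planeWave {r : ℝ} (h : ν.var (ball 0 r) < ⊤) (z : ℂ) :
    Summable ((ball 0 r).indicator fun x ↦ ‖ν.mass x * planeWave z x‖) := by
  rw [← summable_subtype_iff_indicator]
  refine .of_nonneg_of_le (fun _ ↦ norm_nonneg _) (fun x ↦ ?_)
    ((summable_norm_mass_subtype h).mul_right (Real.exp (2 * Real.pi * r * |z.im|)))
  rw [Function.comp_apply, norm_mul]
  gcongr
  exact norm_planeWave_le (mem_ball_zero_iff.1 x.2).le le_rfl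

lemma tsum_enorm_mul_planeWave_le (hz : 0 ≤ z.im) (n : ℕ) :
    ∑' x : ↥(Set.Ioo (0 : ℝ) (n + 1) ∩ Set.Ici (n : ℝ)), ‖ν.mass x * planeWave z x‖ₑ ≤
      ν.var (Set.Ioo 0 (n + 1)) * ENNReal.ofReal (Real.exp (-(2 * Real.pi * n * z.im))) := by
  refine le_trans (ENNReal.tsum_le_tsum fun x ↦ ?_) <| ENNReal.tsum_mul_right.trans_le <|
    mul_le_mul_left (ENNReal.tsum_mono_subtype (fun x ↦ ‖ν.mass x‖ₑ) Set.inter_subset_left) _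
  have hx : (n : ℝ) ≤ x := x.2.2
  rw [enorm_mul, ← ofReal_norm (planeWave z x), norm_planeWave]
  gcongr

/-- Cut `(0, ∞)` into the intervals `[n, n + 1)`: the growth bound makes the sum over the `n`-th of
them `O(e^{-2π(Im z - K)n})`. -/
lemma summable_norm_mul_planeWave {C K : ℝ}
    (hgrow : ∀ s : ℝ, 0 < s →
      ν.var (Set.Ioo (0 : ℝ) s) ≤ ENNReal.ofReal (C * Real.exp (2 * Real.pi * K * s)))
    (hz : 0 ≤ z.im) (hK : K < z.im) :
    Summable fun γ : Set.Ioi (0 : ℝ) ↦ ‖ν.mass γ * planeWave z γ‖ := by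
  set r := Real.exp (-(2 * Real.pi * (z.im - K)))
  have hr : r < 1 := Real.exp_lt_one_iff.2 (by nlinarith [Real.pi_pos])
  have hcover : Set.Ioi (0 : ℝ) ⊆ ⋃ n : ℕ, Set.Ioo (0 : ℝ) (n + 1) ∩ Set.Ici (n : ℝ) :=
    fun x hx ↦ Set.mem_iUnion.2
      ⟨⌊x⌋₊, ⟨hx, Nat.lt_floor_add_one x⟩, Nat.floor_le (Set.mem_Ioi.1 hx).le⟩
  have hterm (n : ℕ) :
      ν.var (Set.Ioo 0 (n + 1)) * ENNReal.ofReal (Real.exp (-(2 * Real.pi * n * z.im))) ≤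
        ENNReal.ofReal (C * Real.exp (2 * Real.pi * K)) * ENNReal.ofReal r ^ n := by
    refine (mul_le_mul_left (hgrow _ n.cast_add_one_pos) _).trans_eq ?_
    rw [← ENNReal.ofReal_pow (Real.exp_pos _).le, ← ENNReal.ofReal_mul' (Real.exp_pos _).le,
      ← ENNReal.ofReal_mul' (by positivity), ← Real.exp_nat_mul, mul_assoc C,
      mul_assoc C, ← Real.exp_add, ← Real.exp_add]
    ring_nf
  refine tsum_enorm_ne_top_iff_summable_norm.1 (ne_top_of_le_ne_top ?_ <| calc
    ∑' γ : Set.Ioi (0 : ℝ), ‖ν.mass γ * planeWave z γ‖ₑ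
      ≤ ∑' n : ℕ, ∑' x : ↥(Set.Ioo (0 : ℝ) (n + 1) ∩ Set.Ici (n : ℝ)),
          ‖ν.mass x * planeWave z x‖ₑ :=
        (ENNReal.tsum_mono_subtype (fun x ↦ ‖ν.mass x * planeWave z x‖ₑ) hcover).trans
          (ENNReal.tsum_iUnion_le_tsum (fun x ↦ ‖ν.mass x * planeWave z x‖ₑ) _)
    _ ≤ ∑' n : ℕ, ENNReal.ofReal (C * Real.exp (2 * Real.pi * K)) * ENNReal.ofReal r ^ n :=
        ENNReal.tsum_le_tsum fun n ↦ (tsum_enorm_mul_planeWave_le hz n).trans (hterm n))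
  rw [ENNReal.tsum_mul_left]
  refine ENNReal.mul_ne_top ENNReal.ofReal_ne_top ?_
  rw [ENNReal.tsum_geometric]
  exact ENNReal.inv_ne_top.2 (tsub_pos_of_lt (ENNReal.ofReal_lt_one.2 hr)).ne'

lemma summable_indicator_Ioi_neg_one (hball : ν.var (ball 0 1) < ⊤)
    (hsum : Summable fun γ : Set.Ioi (0 : ℝ) ↦ ‖ν.mass γ * planeWave z γ‖) :
    Summable ((Set.Ioi (-1)).indicator fun x ↦ ‖ν.mass x * planeWave z x‖) := by
  have hpos : Summable ((Set.Ioi 0).indicator fun x ↦ ‖ν.mass x * planeWave z x‖) :=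
    summable_subtype_iff_indicator.1 hsum
  have hsub : Set.Ioi (-1 : ℝ) ⊆ ball 0 1 ∪ Set.Ioi 0 := fun x hx ↦ by
    rcases le_or_gt x 0 with h | h
    · exact .inl (mem_ball_zero_iff.2 (abs_lt.2 ⟨hx, h.trans_lt one_pos⟩))
    · exact .inr h
  refine .of_nonneg_of_le (Set.indicator_nonneg fun _ _ ↦ norm_nonneg _) (fun x ↦ ?_)
    ((summable_indicator_ball_norm_mul_planeWave hball z).add hpos)
  have hnonneg (A : Set ℝ) : 0 ≤ A.indicator (fun x ↦ ‖ν.mass x * planeWave z x‖) x :=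
    Set.indicator_nonneg (fun _ _ ↦ norm_nonneg _) x
  by_cases hx : x ∈ Set.Ioi (-1)
  · rcases hsub hx with h | h
    · rw [Set.indicator_of_mem hx, Set.indicator_of_mem h]
      exact le_add_of_nonneg_right (hnonneg _)
    · rw [Set.indicator_of_mem hx, Set.indicator_of_mem h]
      exact le_add_of_nonneg_left (hnonneg _)
  · rw [Set.indicator_of_notMem hx]
    exact add_nonneg (hnonneg _) (hnonneg _)

lemma hasSum_mul_planeWave_mul_jump
    (hsum : Summable fun γ : Set.Ioi (0 : ℝ) ↦ ‖ν.mass γ * planeWave z γ‖) :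
    HasSum (fun x ↦ ν.mass x * (planeWave z x *
      ((Set.Ioi 0).indicator 1 x + (Pi.single 0 (1 / 2) : ℝ → ℂ) x)))
      (∑' γ : Set.Ioi (0 : ℝ), ν.mass γ * planeWave z γ + ν.mass 0 / 2) := by
  have hpos : HasSum ((Set.Ioi 0).indicator fun x ↦ ν.mass x * planeWave z x)
      (∑' γ : Set.Ioi (0 : ℝ), ν.mass γ * planeWave z γ) :=
    hasSum_subtype_iff_indicator.1 hsum.of_norm.hasSum
  refine (hpos.add (hasSum_pi_single (0 : ℝ) (ν.mass 0 / 2))).congr_fun fun x ↦ ?_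
  rcases eq_or_ne x 0 with rfl | hx
  · simp [planeWave_zero_right, div_eq_mul_inv]
  · by_cases h : x ∈ Set.Ioi 0 <;> simp [h, hx]

lemma tendsto_pair_truncatedWave {ρ : ℝ → ℂ} (hρ : IsEvenMollifier ρ)
    (hball : ν.var (ball 0 1) < ⊤)
    (hsum : Summable fun γ : Set.Ioi (0 : ℝ) ↦ ‖ν.mass γ * planeWave z γ‖) :
    Tendsto (fun T ↦ ν.pair (truncatedWave ρ T z)) atTop
      (𝓝 (∑' γ : Set.Ioi (0 : ℝ), ν.mass γ * planeWave z γ + ν.mass 0 / 2)) := by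
  rw [← (hasSum_mul_planeWave_mul_jump hsum).tsum_eq]
  refine tendsto_tsum_of_dominated_convergence
    ((summable_indicator_Ioi_neg_one hball hsum).mul_right (∫ t, ‖ρ t‖)) (fun x ↦ ?_) ?_
  · exact ((hρ.tendsto_smoothedIndicator x).const_mul (planeWave z x)).const_mul (ν.mass x)
  · filter_upwards [eventually_ge_atTop 1] with T hT x
    rw [truncatedWave, ← mul_assoc, norm_mul]
    by_cases hx : -1 < x
    · rw [Set.indicator_of_mem (Set.mem_Ioi.2 hx)]
      gcongr
      exact hρ.norm_smoothedIndicator_le _ _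
    · rw [hρ.smoothedIndicator_eq_zero _ (by nlinarith)]
      simp [hx]

end PurePoint

section FourierSide

variable {z : ℂ} {a : ℤ → ℝ} {d : ℂ}

lemma sub_ofReal_ne_zero (hz : z.im ≠ 0) (x : ℝ) : z - x ≠ 0 := fun h ↦
  hz (by simpa using congrArg Complex.im h)

lemma tendsto_fourier_truncatedWave {ρ : ℝ → ℂ} (hρ : IsEvenMollifier ρ) (hz : 0 < z.im) (x : ℝ) :
    Tendsto (fun T ↦ 𝓕 (truncatedWave ρ T z) x) atTop
      (𝓝 (-(2 * Real.pi * Complex.I)⁻¹ * (1 / (z - x)))) := by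
  have hone : Tendsto (fourierLaplace ρ) (𝓝 0) (𝓝 1) := by
    simpa [fourierLaplace_zero, hρ.integral_eq_one] using
      (continuous_fourierLaplace hρ.integrable hρ.support_subset).tendsto 0
  have hpole := tendsto_regularizedPole hone (u := z - x) (by simpa using hz)
  refine (hpole.congr' ?_).trans_eq ?_
  · filter_upwards [eventually_gt_atTop 0] with T hT
    exact (hρ.fourier_truncatedWave hT (sub_ofReal_ne_zero hz.ne' x)).symm
  · congr 1
    field_simp

lemma tendsto_tsum_fourier_truncatedWave {ρ : ℝ → ℂ} (hρ : IsEvenMollifier ρ) (hz : 0 < z.im)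
    {b c : ℕ → ℝ} (hb : IsNearArithmetic (fun n ↦ (b n : ℂ)) d)
    (hc : IsNearArithmetic (fun n ↦ (c n : ℂ)) (-d)) :
    Tendsto (fun T ↦ ∑' n, (𝓕 (truncatedWave ρ T z) (b n) + 𝓕 (truncatedWave ρ T z) (c n))) atTop
      (𝓝 (-(2 * Real.pi * Complex.I)⁻¹ * ∑' n, (1 / (z - b n) + 1 / (z - c n)))) := by
  obtain ⟨C, hC⟩ := exists_isStripBounded_fourierLaplace (hρ.contDiff.of_le (by simp))
    hρ.support_subset z.im
  have hweight : (fun n ↦ C * (5 * ‖(z - b n) + (z - c n)‖ + 2 * z.im⁻¹)) =O[atTop]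
      (1 : ℕ → ℝ) :=
    ((((hb.const_sub z).add_isBigO_one (hc.const_sub z)).norm_left.const_mul_left 5).add
      (Asymptotics.isBigO_const_const _ one_ne_zero atTop)).const_mul_left C
  rw [← tsum_mul_left]
  refine tendsto_tsum_of_dominated_convergence
    ((hb.const_sub z).summable_mul_inv (hc.const_sub z) hweight) (fun n ↦ ?_) ?_
  · simpa only [mul_add] using
      (tendsto_fourier_truncatedWave hρ hz (b n)).add (tendsto_fourier_truncatedWave hρ hz (c n))
  · filter_upwards [eventually_ge_atTop 1] with T hT n
    rw [hρ.fourier_truncatedWave (by positivity) (sub_ofReal_ne_zero hz.ne' _),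
      hρ.fourier_truncatedWave (by positivity) (sub_ofReal_ne_zero hz.ne' _)]
    exact hC.norm_regularizedPole_add_le (fourierLaplace_even hρ.even) hz hT (by simp) (by simp)

lemma fourier_add_tsum_eq_pair {ν : PPM ℝ}
    (htemp : ∀ ψ : SchwartzMap ℝ ℂ, Summable fun n : ℤ ↦ ψ (a n))
    (hF : ∀ ψ : SchwartzMap ℝ ℂ, HasCompactSupport ψ →
      ∑' n : ℤ, (FourierTransform.fourierCLE ℂ (SchwartzMap ℝ ℂ) ψ) (a n) = ν.pair ⇑ψ)
    {ψ : ℝ → ℂ} (hψ : ContDiff ℝ ∞ ψ) (hc : HasCompactSupport ψ) :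
    𝓕 ψ (a 0) + ∑' n : ℕ, (𝓕 ψ (a (n + 1)) + 𝓕 ψ (a (-(n + 1)))) = ν.pair ψ := by
  let Ψ : SchwartzMap ℝ ℂ := hc.toSchwartzMap hψ
  have hsum : Summable fun n : ℤ ↦ 𝓕 ψ (a n) :=
    htemp (FourierTransform.fourierCLE ℂ (SchwartzMap ℝ ℂ) Ψ)
  have hpos : Summable fun n : ℕ ↦ 𝓕 ψ (a (n + 1)) :=
    hsum.comp_injective (i := fun n : ℕ ↦ (n + 1 : ℤ)) fun m n h ↦ by simpa using h
  have hneg : Summable fun n : ℕ ↦ 𝓕 ψ (a (-(n + 1))) :=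
    hsum.comp_injective (i := fun n : ℕ ↦ (-(n + 1) : ℤ)) fun m n h ↦ by simpa using h
  calc 𝓕 ψ (a 0) + ∑' n : ℕ, (𝓕 ψ (a (n + 1)) + 𝓕 ψ (a (-(n + 1))))
      = ∑' n : ℤ, 𝓕 ψ (a n) := by
        rw [hpos.tsum_add hneg, tsum_of_add_one_of_neg_add_one (f := fun n ↦ 𝓕 ψ (a n)) hpos hneg]
        ring
    _ = ν.pair ψ := hF Ψ hc

lemma isNearArithmetic_succ {d M : ℝ} (hd : d ≠ 0) (hM : ∀ n : ℤ, |a n - n * d| ≤ M) :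
    IsNearArithmetic (fun n : ℕ ↦ (a ((n : ℤ) + 1) : ℂ)) d where
  step_ne_zero := ofReal_ne_zero.2 hd
  sub_isBigO := by
    refine Asymptotics.IsBigO.of_bound (M + |d|) (.of_forall fun n ↦ ?_)
    have hn : ‖a (n + 1) - (n + 1) * d‖ ≤ M := by simpa using hM (n + 1)
    have hshift : a (n + 1) - n * d = (a (n + 1) - (n + 1) * d) + d := by ring
    rw [← ofReal_natCast, ← ofReal_mul, ← ofReal_sub, norm_real, hshift]
    simpa using norm_add_le_of_le hn (le_refl ‖d‖)

lemma poleSeries_eq_dirichletSeries {ν : PPM ℝ}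
    (htemp : ∀ ψ : SchwartzMap ℝ ℂ, Summable fun n : ℤ ↦ ψ (a n))
    (hF : ∀ ψ : SchwartzMap ℝ ℂ, HasCompactSupport ψ →
      ∑' n : ℤ, (FourierTransform.fourierCLE ℂ (SchwartzMap ℝ ℂ) ψ) (a n) = ν.pair ⇑ψ)
    (hpos : IsNearArithmetic (fun n : ℕ ↦ (a ((n : ℤ) + 1) : ℂ)) d)
    (hneg : IsNearArithmetic (fun n : ℕ ↦ (a (-((n : ℤ) + 1)) : ℂ)) (-d))
    (hball : ν.var (ball 0 1) < ⊤) (hz : 0 < z.im)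
    (hsum : Summable fun γ : Set.Ioi (0 : ℝ) ↦ ‖ν.mass γ * planeWave z γ‖) :
    1 / (z - a 0) +
        ∑' n : ℕ, (1 / (z - a ((n : ℤ) + 1)) + 1 / (z - a (-((n : ℤ) + 1)))) =
      -(2 * Real.pi * Complex.I) * ∑' γ : Set.Ioi (0 : ℝ), ν.mass γ * planeWave z γ -
        Real.pi * Complex.I * ν.mass 0 := by
  obtain ⟨ρ, hρ⟩ := exists_isEvenMollifier
  have hfourier := (tendsto_fourier_truncatedWave hρ hz (a 0)).add
    (tendsto_tsum_fourier_truncatedWave hρ hz hpos hneg)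
  have hpair := (tendsto_pair_truncatedWave hρ hball hsum).congr' <| by
    filter_upwards [eventually_gt_atTop 0] with T hT
    exact (fourier_add_tsum_eq_pair htemp hF (hρ.contDiff_truncatedWave T z)
      (hρ.hasCompactSupport_truncatedWave hT.ne' z)).symm
  have hlimits := tendsto_nhds_unique hfourier hpair
  rw [← mul_add, neg_mul, neg_eq_iff_eq_neg, inv_mul_eq_iff_eq_mul₀ two_pi_I_ne_zero] at hlimits
  rw [hlimits]
  ring

end FourierSide

/-- Let `a_n = n/D + φ(n)` (`D > 0`, `φ` bounded, `a_n ≠ 0`) and suppose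
`μ_A = Σ_{n∈ℤ} δ_{a_n}` is temperate with pure point Fourier transform
`μ̂_A = Σ_γ b_γ δ_γ` satisfying `|μ̂_A|((0,s)) ≤ C e^{2πKs}`. Let `f` be the canonical
product `(1 - z/a_0) ∏_{n≥1} (1 - z/a_n)(1 - z/a_{-n})`. Then for `Im z > K` the series
below converge and
`f'(z)/f(z) = 1/(z-a_0) + Σ_{n≥1} [1/(z-a_n) + 1/(z-a_{-n})]`
`= -2πi Σ_{γ>0} b_γ e^{2πiγz} - πi b_0`, the last series converging absolutely. -/
theorem statement17 (D : ℝ) (hD : 0 < D) (φ : ℤ → ℝ)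
    (hφ : ∃ M : ℝ, ∀ n : ℤ, |φ n| ≤ M)
    (a : ℤ → ℝ) (ha : ∀ n : ℤ, a n = (n : ℝ) / D + φ n)
    (hne : ∀ n : ℤ, a n ≠ 0)
    (htemp : ∀ ψ : SchwartzMap ℝ ℂ, Summable fun n : ℤ => ψ (a n))
    (ν : PPM ℝ) (hνlf : ν.locFinite)
    (hF : ∀ ψ : SchwartzMap ℝ ℂ, HasCompactSupport ψ →
      ∑' n : ℤ, (FourierTransform.fourierCLE ℂ (SchwartzMap ℝ ℂ) ψ) (a n) = ν.pair ⇑ψ)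
    (C K : ℝ) (hK : 0 ≤ K)
    (hgrow : ∀ s : ℝ, 0 < s →
      ν.var (Set.Ioo (0:ℝ) s) ≤ ENNReal.ofReal (C * Real.exp (2 * Real.pi * K * s)))
    (f : ℂ → ℂ)
    (hf : TendstoLocallyUniformly
      (fun N : ℕ => fun z : ℂ => (1 - z / (a 0 : ℂ)) *
        ∏ n ∈ Finset.range N,
          ((1 - z / (a ((n : ℤ) + 1) : ℂ)) * (1 - z / (a (-((n : ℤ) + 1)) : ℂ))))
      f atTop) :
    ∀ z : ℂ, K < z.im →
      Summable (fun n : ℕ =>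
        1 / (z - (a ((n : ℤ) + 1) : ℂ)) + 1 / (z - (a (-((n : ℤ) + 1)) : ℂ))) ∧
      Summable (fun γ : {γ : ℝ // 0 < γ} =>
        ‖ν.mass γ * Complex.exp (2 * Real.pi * Complex.I * ((γ : ℝ) : ℂ) * z)‖) ∧
      deriv f z / f z = 1 / (z - (a 0 : ℂ)) +
        ∑' n : ℕ, (1 / (z - (a ((n : ℤ) + 1) : ℂ)) + 1 / (z - (a (-((n : ℤ) + 1)) : ℂ))) ∧
      deriv f z / f z =
        -(2 * Real.pi * Complex.I) *
            (∑' γ : {γ : ℝ // 0 < γ},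
              ν.mass γ * Complex.exp (2 * Real.pi * Complex.I * ((γ : ℝ) : ℂ) * z)) -
          Real.pi * Complex.I * ν.mass 0 := by
  obtain ⟨M, hM⟩ := hφ
  intro z hz
  have hz0 : 0 < z.im := hK.trans_lt hz
  have ha' (n : ℤ) : |a n - n * D⁻¹| ≤ M := by simpa [ha, div_eq_mul_inv] using hM n
  have hpos : IsNearArithmetic (fun n : ℕ ↦ (a ((n : ℤ) + 1) : ℂ)) (D⁻¹ : ℝ) :=
    isNearArithmetic_succ (inv_ne_zero hD.ne') ha'
  have hneg : IsNearArithmetic (fun n : ℕ ↦ (a (-((n : ℤ) + 1)) : ℂ)) (-(D⁻¹ : ℝ)) := by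
    simpa using isNearArithmetic_succ (a := fun n ↦ a (-n)) (neg_ne_zero.2 (inv_ne_zero hD.ne'))
      fun n ↦ by simpa using ha' (-n)
  have hza (n : ℤ) : z - a n ≠ 0 := sub_ofReal_ne_zero hz0.ne' (a n)
  have hne' (n : ℤ) : (a n : ℂ) ≠ 0 := ofReal_ne_zero.2 (hne n)
  have hsum := summable_norm_mul_planeWave hgrow hz0.le hz
  have hlog := logDeriv_canonicalProduct (hne' 0) (hza 0) (fun _ ↦ hne' _) (fun _ ↦ hne' _)
    (fun _ ↦ hza _) (fun _ ↦ hza _) hpos hneg hf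
  exact ⟨hpos.summable_one_div_add_one_div hneg (fun _ ↦ hza _) (fun _ ↦ hza _), hsum, hlog,
    hlog.trans (poleSeries_eq_dirichletSeries htemp hF hpos hneg (hνlf 1) hz0 hsum)⟩

end
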